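/- arXiv:2211.05210 — 2 statements merged into one kernel-verified Lean document; each statement's English description precedes it below -/
import Mathlib

section
/- Let q ≥ 2, r ≥ 2·e·W(1/e), t = r·q/e, and set α = t^{−q}·∫_0^t e^{x−t}·x^q dx and g(q) = Γ(q+1)·(q/e)^{−q}. Then C₀^q·(α·r^q + e^{−r·q/e}·g(q)) ≥ 1, where C₀ = e^{W(1/e)}. -/
lemma gamma_lower (q : ℝ) (hq : 0 < q) : q ^ q * Real.exp (-q) ≤ Real.Gamma (q + 1) := by
  have hint : MeasureTheory.IntegrableOn (fun x : ℝ => Real.exp (-x) * x ^ q) (Set.Ioi 0) := by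
    simpa using Real.GammaIntegral_convergent (s := q + 1) (by linarith)
  have hsub : Set.Ioi q ⊆ Set.Ioi (0 : ℝ) := Set.Ioi_subset_Ioi hq.le
  have h0 : Real.Gamma (q + 1) = ∫ x in Set.Ioi (0 : ℝ), Real.exp (-x) * x ^ q := by
    rw [Real.Gamma_eq_integral (by linarith)]
    simp
  rw [h0]
  calc q ^ q * Real.exp (-q) = ∫ x in Set.Ioi q, Real.exp (-x) * q ^ q := by
        rw [MeasureTheory.integral_mul_const, integral_exp_neg_Ioi, mul_comm]
    _ ≤ ∫ x in Set.Ioi q, Real.exp (-x) * x ^ q := by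
        apply MeasureTheory.setIntegral_mono_on
        · exact (integrableOn_exp_neg_Ioi q).mul_const _
        · exact hint.mono_set hsub
        · exact measurableSet_Ioi
        · intro x hx
          have : q ≤ x := le_of_lt hx
          gcongr
    _ ≤ _ := by
        apply MeasureTheory.setIntegral_mono_set hint
        · refine (MeasureTheory.ae_restrict_iff' measurableSet_Ioi).2 (Filter.Eventually.of_forall ?_)
          intro x hx
          have : (0 : ℝ) < x := hx
          show (0 : ℝ) ≤ _
          positivity
        · exact hsub.eventuallyLE

lemma int_lower (q a t : ℝ) (hq : 0 < q) (ha : 0 < a) (hat : a ≤ t) :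
    a ^ q * (Real.exp t - Real.exp a) ≤ ∫ x in (0 : ℝ)..t, Real.exp x * x ^ q := by
  have hc : Continuous (fun x : ℝ => Real.exp x * x ^ q) :=
    Real.continuous_exp.mul (Real.continuous_rpow_const hq.le)
  have h1 : 0 ≤ ∫ x in (0 : ℝ)..a, Real.exp x * x ^ q := by
    apply intervalIntegral.integral_nonneg ha.le
    intro x hx
    have := hx.1
    positivity
  have h2 : a ^ q * (Real.exp t - Real.exp a) ≤ ∫ x in a..t, Real.exp x * x ^ q := by
    calc a ^ q * (Real.exp t - Real.exp a) = ∫ x in a..t, Real.exp x * a ^ q := by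
          rw [intervalIntegral.integral_mul_const, integral_exp, mul_comm]
      _ ≤ _ := by
          apply intervalIntegral.integral_mono_on hat
          · exact (Real.continuous_exp.mul continuous_const).intervalIntegrable _ _
          · exact hc.intervalIntegrable _ _
          · intro x hx
            have := hx.1
            gcongr
  rw [← intervalIntegral.integral_add_adjacent_intervals (hc.intervalIntegrable 0 a)
    (hc.intervalIntegrable a t)]
  linarith

/-- If `q ≥ 2`, `r ≥ 2 e W(1/e)`, `t = r q / e`,
`α = t^{-q} ∫_0^t e^{x-t} x^q dx` and `g(q) = Γ(q+1) (q/e)^{-q}`, then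
`C₀^q (α r^q + e^{-rq/e} g(q)) ≥ 1`, where `C₀ = e^{W(1/e)}`. -/
theorem rhs_ge_one
    (w : ℝ) (hw : 0 < w) (hwe : w * Real.exp w = Real.exp (-1))
    (q r t α : ℝ) (hq : 2 ≤ q) (hr : 2 * (Real.exp 1 * w) ≤ r)
    (ht : t = r * q / Real.exp 1)
    (hα : α = t ^ (-q) * ∫ x in (0 : ℝ)..t, Real.exp (x - t) * x ^ q) :
    1 ≤ Real.exp w ^ q *
      (α * r ^ q + Real.exp (-(r * q / Real.exp 1)) *
        (Real.Gamma (q + 1) * (q / Real.exp 1) ^ (-q))) := by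
  have hq0 : 0 < q := by linarith
  have he : 0 < Real.exp 1 := Real.exp_pos 1
  have hew : 0 < Real.exp 1 * w := by positivity
  have hr0 : 0 < r := by linarith
  have ht0 : 0 < t := by rw [ht]; positivity
  have hwt : w * q ≤ t := by
    rw [ht, le_div_iff₀ he]
    nlinarith
  have hI : ∫ x in (0 : ℝ)..t, Real.exp (x - t) * x ^ q
      = Real.exp (-t) * ∫ x in (0 : ℝ)..t, Real.exp x * x ^ q := by
    rw [← intervalIntegral.integral_const_mul]
    congr 1
    ext x
    rw [sub_eq_add_neg, Real.exp_add]
    ring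
  have hA := gamma_lower q hq0
  have hB := int_lower q (w * q) t hq0 (by positivity) hwt
  set E := ∫ x in (0 : ℝ)..t, Real.exp x * x ^ q with hE
  have hK : (w * q) ^ q * Real.exp (w * q) = q ^ q * Real.exp (-q) := by
    have h1 : Real.exp (w * q) = Real.exp w ^ q := by rw [Real.exp_mul]
    have h2 : Real.exp (-q) = Real.exp (-1) ^ q := by rw [← Real.exp_mul]; simp
    rw [h1, h2, ← hwe, Real.mul_rpow hw.le hq0.le, Real.mul_rpow hw.le (Real.exp_pos w).le]
    ring
  have hsum : (w * q) ^ q * Real.exp t ≤ E + Real.Gamma (q + 1) := by nlinarith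
  have hrt : t ^ (-q) * r ^ q = (q / Real.exp 1) ^ (-q) := by
    have : t = r * (q / Real.exp 1) := by rw [ht]; ring
    rw [this, Real.mul_rpow hr0.le (by positivity), Real.rpow_neg hr0.le]
    have : r ^ q ≠ 0 := by positivity
    field_simp
  have hC : Real.exp w ^ q * (q / Real.exp 1) ^ (-q) * (w * q) ^ q = 1 := by
    rw [Real.rpow_neg (by positivity), ← Real.inv_rpow (by positivity),
      ← Real.mul_rpow (by positivity) (by positivity),
      ← Real.mul_rpow (by positivity) (by positivity)]
    have : Real.exp w * (q / Real.exp 1)⁻¹ * (w * q) = 1 := by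
      have h3 : Real.exp w * (q / Real.exp 1)⁻¹ * (w * q) = (w * Real.exp w) * Real.exp 1 := by
        field_simp
      rw [h3, hwe, ← Real.exp_add]
      simp
    rw [this, Real.one_rpow]
  rw [hα, hI, ← ht]
  have hfin : Real.exp w ^ q * (t ^ (-q) * (Real.exp (-t) * E) * r ^ q + Real.exp (-t) *
        (Real.Gamma (q + 1) * (q / Real.exp 1) ^ (-q)))
      = Real.exp w ^ q * (q / Real.exp 1) ^ (-q) * Real.exp (-t) * (E + Real.Gamma (q + 1)) := by
    rw [← hrt]; ring
  rw [hfin]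
  calc (1 : ℝ) = Real.exp w ^ q * (q / Real.exp 1) ^ (-q) * Real.exp (-t) *
        ((w * q) ^ q * Real.exp t) := by
        have h4 : Real.exp (-t) * Real.exp t = 1 := by rw [← Real.exp_add]; simp
        calc (1 : ℝ) = (Real.exp w ^ q * (q / Real.exp 1) ^ (-q) * (w * q) ^ q) *
              (Real.exp (-t) * Real.exp t) := by rw [hC, h4]; norm_num
          _ = _ := by ring
    _ ≤ _ := by gcongr
end

section
/- Let X have the exponential distribution with parameter 1, let p ≥ q ≥ 2, t ≥ q, and suppose p/q ≥ √2/C₀ where C₀ = e^{W(1/e)}. Then ‖X − t‖_p ≤ C₀·(p/q)·‖X − t‖_q. -/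
open MeasureTheory

/-- `‖X - t‖ₛ` for `X` exponential with parameter 1:
`(∫_0^∞ e^{-x} |x - t|^s dx)^{1/s}`. -/
noncomputable def expShiftNorm (s t : ℝ) : ℝ :=
  (∫ x in Set.Ioi (0 : ℝ), Real.exp (-x) * |x - t| ^ s) ^ (1 / s)

lemma aux_young (u b r : ℝ) (hu : 0 ≤ u) (hb : 0 < b) (hr : 0 ≤ r) :
    u ^ r ≤ b ^ r * Real.exp (r * (u / b - 1)) := by
  have h1 : u ≤ b * Real.exp (u / b - 1) := by
    have h := Real.add_one_le_exp (u / b - 1)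
    have h2 : u / b ≤ Real.exp (u / b - 1) := by linarith
    rw [div_le_iff₀ hb] at h2
    linarith
  calc u ^ r ≤ (b * Real.exp (u / b - 1)) ^ r := Real.rpow_le_rpow hu h1 hr
    _ = _ := by
      rw [Real.mul_rpow hb.le (Real.exp_pos _).le, ← Real.exp_mul, mul_comm r]

lemma aux_integrable (s t : ℝ) (hs : 0 < s) (ht : 0 ≤ t) :
    IntegrableOn (fun x => Real.exp (-x) * |x - t| ^ s) (Set.Ioi (0 : ℝ)) := by
  have hI := (integrableOn_exp_mul_Ioi (a := -(1/2)) (by norm_num) 0).const_mul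
    ((2 * s) ^ s * Real.exp (t / 2))
  refine Integrable.mono' hI ?_ ?_
  · have : Continuous (fun x : ℝ => Real.exp (-x) * |x - t| ^ s) := by
      have : Continuous (fun x : ℝ => |x - t| ^ s) :=
        (by fun_prop : Continuous (fun x : ℝ => |x - t|)).rpow_const (fun x => Or.inr hs.le)
      fun_prop
    exact this.aestronglyMeasurable
  · refine (ae_restrict_iff' measurableSet_Ioi).mpr (Filter.Eventually.of_forall fun x hx => ?_)
    have hx : 0 < x := hx
    rw [Real.norm_of_nonneg (by positivity)]
    have h1 := aux_young |x - t| (2 * s) s (abs_nonneg _) (by positivity) hs.le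
    have h2 : |x - t| ≤ x + t := by rw [abs_le]; constructor <;> linarith
    have h3 : s * (|x - t| / (2 * s) - 1) ≤ t / 2 + x / 2 := by
      have : s * (|x - t| / (2 * s) - 1) = |x - t| / 2 - s := by field_simp
      linarith
    calc Real.exp (-x) * |x - t| ^ s
        ≤ Real.exp (-x) * ((2 * s) ^ s * Real.exp (t / 2 + x / 2)) := by
          gcongr
          exact h1.trans (by gcongr)
      _ = (2 * s) ^ s * Real.exp (t / 2) * Real.exp (-(1/2) * x) := by
          rw [mul_left_comm, ← Real.exp_add, mul_assoc, ← Real.exp_add]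
          ring_nf

lemma aux_Gamma (p : ℝ) (hp : 1 ≤ p) : Real.Gamma (p + 1) ≤ p ^ p * (p * Real.exp (1 - p)) := by
  have hp0 : 0 < p := by linarith
  rw [Real.Gamma_add_one hp0.ne', Real.Gamma_eq_integral hp0]
  have hneg : -(1 / p) < 0 := by simp [hp0]
  have hI := (integrableOn_exp_mul_Ioi (a := -(1/p)) hneg 0).const_mul
    (p ^ (p - 1) * Real.exp (1 - p))
  have hle : (∫ x in Set.Ioi (0:ℝ), Real.exp (-x) * x ^ (p - 1)) ≤
      ∫ x in Set.Ioi (0:ℝ), p ^ (p - 1) * Real.exp (1 - p) * Real.exp (-(1/p) * x) := by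
    refine setIntegral_mono_on (Real.GammaIntegral_convergent hp0) hI measurableSet_Ioi ?_
    intro x hx
    have hx : 0 < x := hx
    have h1 := aux_young x p (p - 1) hx.le hp0 (by linarith)
    calc Real.exp (-x) * x ^ (p - 1)
        ≤ Real.exp (-x) * (p ^ (p - 1) * Real.exp ((p - 1) * (x / p - 1))) := by gcongr
      _ = _ := by
          rw [mul_left_comm, ← Real.exp_add, mul_assoc, ← Real.exp_add]
          congr 2
          field_simp
          ring
  have hval : ∫ x in Set.Ioi (0:ℝ), p ^ (p - 1) * Real.exp (1 - p) * Real.exp (-(1/p) * x)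
      = p ^ p * Real.exp (1 - p) := by
    rw [integral_const_mul, integral_exp_mul_Ioi hneg]
    have : p ^ p = p ^ (p - 1) * p := by
      rw [← Real.rpow_add_one hp0.ne']; simp
    rw [this]
    simp
    ring
  rw [hval] at hle
  calc p * (∫ x in Set.Ioi (0:ℝ), Real.exp (-x) * x ^ (p - 1))
      ≤ p * (p ^ p * Real.exp (1 - p)) := by gcongr
    _ = _ := by ring

lemma aux_upper (p t : ℝ) (hp : 0 < p) (ht : 0 ≤ t) :
    (∫ x in Set.Ioi (0 : ℝ), Real.exp (-x) * |x - t| ^ p) ≤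
      (1 - Real.exp (-t)) * t ^ p + Real.exp (-t) * Real.Gamma (p + 1) := by
  have hI := aux_integrable p t hp ht
  have hE : IntegrableOn (fun x : ℝ => Real.exp (-x)) (Set.Ioi 0) := by
    simpa using integrableOn_exp_mul_Ioi (a := -1) (by norm_num) 0
  have hU : Set.Ioc 0 t ∪ Set.Ioi t = Set.Ioi 0 := Set.Ioc_union_Ioi_eq_Ioi ht
  have hs1 : Set.Ioc 0 t ⊆ Set.Ioi 0 := fun x hx => hx.1
  have hs2 : Set.Ioi t ⊆ Set.Ioi 0 := fun x hx => lt_of_le_of_lt ht hx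
  have hdis : Disjoint (Set.Ioc 0 t) (Set.Ioi t) := by
    rw [Set.disjoint_left]; intro x hx hx'; exact absurd hx.2 (not_le.mpr hx')
  have hsplit : ∀ f : ℝ → ℝ, IntegrableOn f (Set.Ioi 0) →
      ∫ x in Set.Ioi 0, f x = (∫ x in Set.Ioc 0 t, f x) + ∫ x in Set.Ioi t, f x := by
    intro f hf
    rw [← hU, setIntegral_union hdis measurableSet_Ioi (hf.mono_set hs1) (hf.mono_set hs2)]
  have hEv : ∫ x in Set.Ioc 0 t, Real.exp (-x) = 1 - Real.exp (-t) := by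
    have := hsplit _ hE
    rw [integral_exp_neg_Ioi, integral_exp_neg_Ioi] at this
    simp at this
    linarith
  have h1 : ∫ x in Set.Ioc 0 t, Real.exp (-x) * |x - t| ^ p ≤ (1 - Real.exp (-t)) * t ^ p := by
    rw [← hEv, ← integral_mul_const]
    refine setIntegral_mono_on (hI.mono_set hs1) ((hE.mono_set hs1).mul_const _)
      measurableSet_Ioc ?_
    intro x hx
    have : |x - t| ≤ t := by rw [abs_le]; constructor <;> linarith [hx.1, hx.2]
    gcongr
  have h2 : ∫ x in Set.Ioi t, Real.exp (-x) * |x - t| ^ p = Real.exp (-t) * Real.Gamma (p + 1) := by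
    have hmp := measurePreserving_add_right (volume : Measure ℝ) t
    have := hmp.setIntegral_preimage_emb (measurableEmbedding_addRight t)
      (fun x => Real.exp (-x) * |x - t| ^ p) (Set.Ioi t)
    rw [← this, Real.Gamma_eq_integral (by linarith), ← integral_const_mul]
    have hpre : (fun x : ℝ => x + t) ⁻¹' Set.Ioi t = Set.Ioi 0 := by ext x; simp
    rw [hpre]
    refine setIntegral_congr_fun measurableSet_Ioi ?_
    intro x hx
    have hx : 0 < x := hx
    simp only [add_sub_cancel_right, abs_of_pos hx]
    rw [neg_add, Real.exp_add]
    ring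
  rw [hsplit _ hI, h2]
  linarith

lemma aux_second (t : ℝ) :
    IntegrableOn (fun x => Real.exp (-x) * (x - t) ^ 2) (Set.Ioi (0:ℝ)) ∧
    ∫ x in Set.Ioi (0:ℝ), Real.exp (-x) * (x - t) ^ 2 = t ^ 2 - 2 * t + 2 := by
  have hd : ∀ x ∈ Set.Ici (0:ℝ), HasDerivAt
      (fun x => -(Real.exp (-x) * ((x - t) ^ 2 + 2 * (x - t) + 2)))
      (Real.exp (-x) * (x - t) ^ 2) x := by
    intro x _
    have h1 : HasDerivAt (fun x : ℝ => Real.exp (-x)) (Real.exp (-x) * (-1)) x :=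
      (hasDerivAt_neg x).exp
    have h0 : HasDerivAt (fun x : ℝ => x - t) 1 x := (hasDerivAt_id x).sub_const t
    have h2 := ((h0.pow 2).add (h0.const_mul 2)).add_const 2
    refine (h1.mul h2).neg.congr_deriv ?_
    simp only [Pi.add_apply, Pi.pow_apply]
    push_cast
    ring
  have hlim : Filter.Tendsto (fun x : ℝ => -(Real.exp (-x) * ((x - t) ^ 2 + 2 * (x - t) + 2)))
      Filter.atTop (nhds 0) := by
    have e2 := Real.tendsto_pow_mul_exp_neg_atTop_nhds_zero 2
    have e1 := Real.tendsto_pow_mul_exp_neg_atTop_nhds_zero 1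
    have e0 := Real.tendsto_pow_mul_exp_neg_atTop_nhds_zero 0
    have := ((e2.add (e1.const_mul (2 - 2 * t))).add (e0.const_mul (t ^ 2 - 2 * t + 2))).neg
    convert this using 1
    · ext x; ring
    · simp
  have hpos : ∀ x ∈ Set.Ioi (0:ℝ), 0 ≤ Real.exp (-x) * (x - t) ^ 2 := fun x _ => by positivity
  refine ⟨integrableOn_Ioi_deriv_of_nonneg' hd hpos hlim, ?_⟩
  rw [integral_Ioi_of_hasDerivAt_of_nonneg' hd hpos hlim]
  simp
  ring

lemma aux_lower (q t : ℝ) (hq : 2 ≤ q) (ht : 0 < t) :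
    (t / Real.sqrt 2) ^ q ≤ ∫ x in Set.Ioi (0 : ℝ), Real.exp (-x) * |x - t| ^ q := by
  set a := t / Real.sqrt 2 with ha
  have ha0 : 0 < a := by positivity
  have ha2 : a ^ 2 = t ^ 2 / 2 := by rw [ha, div_pow, Real.sq_sqrt (by norm_num)]
  obtain ⟨hI2, hv2⟩ := aux_second t
  have hE : IntegrableOn (fun x : ℝ => Real.exp (-x)) (Set.Ioi 0) := by
    simpa using integrableOn_exp_mul_Ioi (a := -1) (by norm_num) 0
  have key : ∀ x : ℝ, a ^ q * (1 + q / 2 * ((x - t) ^ 2 / a ^ 2 - 1)) ≤ |x - t| ^ q := by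
    intro x
    have h := one_add_mul_self_le_rpow_one_add (s := (x - t) ^ 2 / a ^ 2 - 1) (p := q / 2)
      (by have : 0 ≤ (x - t) ^ 2 / a ^ 2 := by positivity
          linarith) (by linarith)
    have e : (1 + ((x - t) ^ 2 / a ^ 2 - 1)) ^ (q / 2) = |x - t| ^ q / a ^ q := by
      rw [← Real.div_rpow (abs_nonneg _) ha0.le]
      have : 1 + ((x - t) ^ 2 / a ^ 2 - 1) = (|x - t| / a) ^ (2:ℝ) := by
        rw [Real.rpow_two, div_pow |x - t|, sq_abs]; ring
      rw [this, ← Real.rpow_mul (by positivity)]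
      congr 1; ring
    rw [e, le_div_iff₀ (by positivity)] at h
    linarith
  set A := a ^ q * (1 - q / 2) with hA
  set B := a ^ q * (q / 2) / a ^ 2 with hB
  have hle : ∫ x in Set.Ioi (0:ℝ), (A * Real.exp (-x) + B * (Real.exp (-x) * (x - t) ^ 2)) ≤
      ∫ x in Set.Ioi (0 : ℝ), Real.exp (-x) * |x - t| ^ q := by
    refine setIntegral_mono_on ((hE.const_mul A).add (hI2.const_mul B))
      (aux_integrable q t (by linarith) ht.le) measurableSet_Ioi ?_
    intro x _
    have := mul_le_mul_of_nonneg_left (key x) (Real.exp_pos (-x)).le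
    refine le_trans (le_of_eq ?_) this
    rw [hA, hB]; ring
  rw [integral_add (hE.const_mul A) (hI2.const_mul B), integral_const_mul, integral_const_mul,
    integral_exp_neg_Ioi_zero, hv2] at hle
  refine le_trans ?_ hle
  have hBn : 0 ≤ B := by positivity
  have hBa : B * a ^ 2 = a ^ q * (q / 2) := by rw [hB]; field_simp
  have h3 : a ^ 2 ≤ t ^ 2 - 2 * t + 2 := by rw [ha2]; nlinarith [sq_nonneg (t - 2)]
  have := mul_le_mul_of_nonneg_left h3 hBn
  rw [hBa] at this
  rw [hA]; linarith

lemma aux_w (w : ℝ) (hwe : w * Real.exp w = Real.exp (-1)) : 1 / 4 ≤ w := by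
  by_contra! h
  have h2 : w * Real.exp w ≤ 1 / 4 * Real.exp (1 / 4) := by
    have : Real.exp w ≤ Real.exp (1 / 4) := Real.exp_le_exp.mpr h.le
    nlinarith [Real.exp_pos w]
  rw [hwe] at h2
  have h3 : Real.exp 1 * Real.exp (1/4) < 4 := by
    rw [← Real.exp_add]
    have h5 : Real.exp (1 + 1/4) ^ 4 = Real.exp 1 ^ 5 := by
      rw [← Real.exp_nat_mul, ← Real.exp_nat_mul]; norm_num
    have h6 : Real.exp 1 ^ 5 < 4 ^ 4 := by
      calc Real.exp 1 ^ 5 < 3 ^ 5 := by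
            gcongr; linarith [Real.exp_one_lt_d9]
        _ < 4 ^ 4 := by norm_num
    rw [← h5] at h6
    exact lt_of_pow_lt_pow_left₀ 4 (by norm_num) h6
  have h4 : Real.exp 1 * Real.exp (-1) = 1 := by rw [← Real.exp_add]; simp
  nlinarith [Real.exp_pos 1]

lemma aux_c (w p : ℝ) (hw : 1 / 4 ≤ w) (hp : 2 ≤ p) :
    Real.Gamma (p + 1) ≤ (Real.exp w * p / Real.sqrt 2) ^ p := by
  have hp0 : 0 < p := by linarith
  refine (aux_Gamma p (by linarith)).trans ?_
  have hc : Real.exp (-(1/10)) ≤ Real.exp w / Real.sqrt 2 := by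
    rw [le_div_iff₀ (by positivity)]
    have hs : Real.sqrt 2 = Real.exp (Real.log 2 / 2) := by
      rw [Real.sqrt_eq_rpow, Real.rpow_def_of_pos (by norm_num)]; ring_nf
    rw [hs, ← Real.exp_add]
    apply Real.exp_le_exp.mpr
    linarith [Real.log_two_lt_d9]
  have h2 : p * Real.exp (1 - p) ≤ Real.exp (-(1/10)) ^ p := by
    rw [← Real.exp_mul]
    have h3 : p ≤ Real.exp (9/10 * p - 1) := by
      have e1 : Real.exp (9/10 * p - 1) = Real.exp (4/5) * Real.exp (9/10 * (p - 2)) := by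
        rw [← Real.exp_add]; ring_nf
      have e2 := Real.add_one_le_exp (9/10 * (p - 2))
      have e3 : (2.2:ℝ) ≤ Real.exp (4/5) := by
        have := Real.sum_le_exp_of_nonneg (x := 4/5) (by norm_num) 5
        simp [Finset.sum_range_succ, Nat.factorial] at this
        norm_num at this ⊢
        linarith
      rw [e1]
      nlinarith
    calc p * Real.exp (1 - p) ≤ Real.exp (9/10 * p - 1) * Real.exp (1 - p) := by gcongr
      _ = _ := by rw [← Real.exp_add]; ring_nf
  have e : Real.exp w * p / Real.sqrt 2 = p * (Real.exp w / Real.sqrt 2) := by ring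
  rw [e, Real.mul_rpow hp0.le (by positivity)]
  gcongr
  exact h2.trans (by gcongr)

/-- If `X` is exponential with parameter 1, `p ≥ q ≥ 2`, `t ≥ q` and
`p/q ≥ √2 / C₀` with `C₀ = e^{W(1/e)}`, then
`‖X - t‖_p ≤ C₀ (p/q) ‖X - t‖_q`. -/
theorem expShiftNorm_le_of_large_t
    (w : ℝ) (hw : 0 < w) (hwe : w * Real.exp w = Real.exp (-1))
    (p q t : ℝ) (hq : 2 ≤ q) (hqp : q ≤ p) (ht : q ≤ t)
    (hratio : Real.sqrt 2 / Real.exp w ≤ p / q) :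
    expShiftNorm p t ≤ Real.exp w * (p / q) * expShiftNorm q t := by
  have hq0 : 0 < q := by linarith
  have hp0 : 0 < p := by linarith
  have ht0 : 0 < t := by linarith
  have hs : 0 < Real.sqrt 2 := by positivity
  set M := Real.exp w * (p / q) * (t / Real.sqrt 2) with hM
  have hM0 : 0 < M := by positivity
  have hMt : t ≤ M := by
    rw [div_le_iff₀ (Real.exp_pos w)] at hratio
    have : M = (p / q * Real.exp w) * t / Real.sqrt 2 := by rw [hM]; ring
    rw [this, le_div_iff₀ hs, mul_comm]
    gcongr
  have hMp : Real.exp w * p / Real.sqrt 2 ≤ M := by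
    have : M = Real.exp w * p / Real.sqrt 2 * (t / q) := by rw [hM]; ring
    rw [this]
    apply le_mul_of_one_le_right (by positivity)
    rwa [one_le_div hq0]
  have hG : Real.Gamma (p + 1) ≤ M ^ p :=
    (aux_c w p (aux_w w hwe) (by linarith)).trans (by gcongr)
  have hT : t ^ p ≤ M ^ p := by gcongr
  have hup : (∫ x in Set.Ioi (0 : ℝ), Real.exp (-x) * |x - t| ^ p) ≤ M ^ p := by
    refine (aux_upper p t hp0 ht0.le).trans ?_
    have h1 : Real.exp (-t) ≤ 1 := Real.exp_le_one_iff.mpr (by linarith)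
    have := mul_le_mul_of_nonneg_left hT (sub_nonneg.mpr h1)
    have := mul_le_mul_of_nonneg_left hG (Real.exp_pos (-t)).le
    linarith
  have hU : expShiftNorm p t ≤ M := by
    unfold expShiftNorm
    have h0 : 0 ≤ ∫ x in Set.Ioi (0 : ℝ), Real.exp (-x) * |x - t| ^ p :=
      integral_nonneg fun x => by positivity
    refine (Real.rpow_le_rpow h0 hup (by positivity)).trans (le_of_eq ?_)
    rw [one_div, Real.rpow_rpow_inv hM0.le hp0.ne']
  have hL : t / Real.sqrt 2 ≤ expShiftNorm q t := by
    unfold expShiftNorm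
    have h0 : 0 ≤ t / Real.sqrt 2 := by positivity
    refine (le_of_eq ?_).trans
      (Real.rpow_le_rpow (by positivity) (aux_lower q t hq ht0) (by positivity : 0 ≤ 1 / q))
    rw [one_div, Real.rpow_rpow_inv h0 hq0.ne']
  refine hU.trans ?_
  rw [hM]
  gcongr
end
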